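/- arXiv:1408.3069 — 2 statements merged into one kernel-verified Lean document; each statement's English description precedes it below -/
import Mathlib

section
/- Let A be an associative interchange algebra over a field F of characteristic 0, with Lie brackets [x,y]_∘ = x∘y − y∘x and [x,y]_• = x•y − y•x. Then for all a, b, c, d, e in A the following alternating sum over all 24 permutations σ of the ordered list (b,c,d,e), with sign ε(σ), vanishes: Σ_σ ε(σ) ( 2·[[a,b^σ]_∘, [a,[c^σ,[d^σ,e^σ]_∘]_•]_∘]_• − 2·[[a,b^σ]_∘, [c^σ,[a,[d^σ,e^σ]_∘]_•]_∘]_• + 2·[[a,b^σ]_∘, [c^σ,[d^σ,[a,e^σ]_∘]_•]_∘]_• − [[b^σ,c^σ]_∘, [a,[d^σ,[a,e^σ]_∘]_•]_∘]_• + [[b^σ,c^σ]_∘, [d^σ,[a,[a,e^σ]_∘]_•]_∘]_• + [[a,b^σ]_∘, [[a,c^σ]_∘,[d^σ,e^σ]_•]_∘]_• + 2·[[a,b^σ]_∘, [[c^σ,d^σ]_∘,[a,e^σ]_•]_∘]_• + [[b^σ,c^σ]_∘, [[a,d^σ]_∘,[a,e^σ]_•]_∘]_• + [[a,[a,b^σ]_∘]_∘,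 [c^σ,[d^σ,e^σ]_•]_∘]_• − [[a,[b^σ,c^σ]_∘]_∘, [d^σ,[a,e^σ]_•]_∘]_• + [[b^σ,[a,c^σ]_∘]_∘, [a,[d^σ,e^σ]_•]_∘]_• ) = 0, where (b^σ,c^σ,d^σ,e^σ) denotes the image of (b,c,d,e) under σ. -/
/-!
Reversing `∘` or `•` again gives an interchange algebra and changes the sign of the corresponding
bracket, so every bracket monomial is a signed sum, over the four choices of `∘` or its opposite and
`•` or its opposite, of a few words. Only two shapes of words are needed, the corner words
`(p • q) ∘ (r • s • (t ∘ u))` and the middle words `(p • q) ∘ (r • (s ∘ t) • u)`. After alternation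
in four of the letters the corner words cancel, whatever their values are, and the middle words
cancel against the middle words for the opposite of `•`.
-/

open Equiv

section Alternation

variable {A B : Type*} [AddCommGroup B] (v : Fin 4 → A)

/-- The alternating sum of the function `f` of four arguments over all rearrangements of the four
entries of `v`. -/
def altSum (f : A → A → A → A → B) : B :=
  ∑ σ : Perm (Fin 4), (Perm.sign σ : ℤ) • f (v (σ 0)) (v (σ 1)) (v (σ 2)) (v (σ 3))

theorem altSum_add (f g : A → A → A → A → B) :
    altSum v (fun b c d e => f b c d e + g b c d e) = altSum v f + altSum v g := by
  simp only [altSum, smul_add, Finset.sum_add_distrib]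

theorem altSum_sub (f g : A → A → A → A → B) :
    altSum v (fun b c d e => f b c d e - g b c d e) = altSum v f - altSum v g := by
  simp only [altSum, smul_sub, Finset.sum_sub_distrib]

theorem altSum_nsmul (n : ℕ) (f : A → A → A → A → B) :
    altSum v (fun b c d e => n • f b c d e) = n • altSum v f := by
  simp only [altSum, Finset.smul_sum, smul_comm n]

theorem altSum_perm (τ : Perm (Fin 4)) (f : A → A → A → A → B) :
    altSum v (fun b c d e => f (![b, c, d, e] (τ 0)) (![b, c, d, e] (τ 1))
      (![b, c, d, e] (τ 2)) (![b, c, d, e] (τ 3))) = (Perm.sign τ : ℤ) • altSum v f := by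
  have vec_eq_comp (σ : Perm (Fin 4)) : ![v (σ 0), v (σ 1), v (σ 2), v (σ 3)] = v ∘ σ := by
    ext i; fin_cases i <;> rfl
  simp only [altSum, vec_eq_comp, Finset.smul_sum, Function.comp_apply, smul_smul]
  refine Fintype.sum_equiv (Equiv.mulRight τ) _ _ fun σ => ?_
  rw [coe_mulRight, Perm.sign_mul, Units.val_mul, mul_left_comm, ← Units.val_mul,
    Int.units_mul_self, Units.val_one, mul_one]
  rfl

theorem altSum_perm_odd (f : A → A → A → A → B) {τ : Perm (Fin 4)} (hτ : Perm.sign τ = -1) :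
    altSum v (fun b c d e => f (![b, c, d, e] (τ 0)) (![b, c, d, e] (τ 1))
      (![b, c, d, e] (τ 2)) (![b, c, d, e] (τ 3))) = -altSum v f := by
  rw [altSum_perm, hτ, Units.val_neg, Units.val_one, neg_one_smul]

theorem altSum_perm_even (f : A → A → A → A → B) {τ : Perm (Fin 4)} (hτ : Perm.sign τ = 1) :
    altSum v (fun b c d e => f (![b, c, d, e] (τ 0)) (![b, c, d, e] (τ 1))
      (![b, c, d, e] (τ 2)) (![b, c, d, e] (τ 3))) = altSum v f := by
  rw [altSum_perm, hτ, Units.val_one, one_smul]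

-- Applied to a fixed `f`, these equations are rewrite rules that sort the letters; with `f` left
-- free they would loop.
theorem altSum_reorderings (f : A → A → A → A → B) :
    altSum v (fun b c d e => f b c e d) = -altSum v f ∧
    altSum v (fun b c d e => f b d c e) = -altSum v f ∧
    altSum v (fun b c d e => f b e d c) = -altSum v f ∧
    altSum v (fun b c d e => f c b d e) = -altSum v f ∧
    altSum v (fun b c d e => f c d e b) = -altSum v f ∧
    altSum v (fun b c d e => f d b e c) = -altSum v f ∧
    altSum v (fun b c d e => f d e c b) = -altSum v f ∧
    altSum v (fun b c d e => f b d e c) = altSum v f ∧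
    altSum v (fun b c d e => f b e c d) = altSum v f ∧
    altSum v (fun b c d e => f c b e d) = altSum v f ∧
    altSum v (fun b c d e => f c d b e) = altSum v f ∧
    altSum v (fun b c d e => f c e d b) = altSum v f ∧
    altSum v (fun b c d e => f d b c e) = altSum v f ∧
    altSum v (fun b c d e => f d c e b) = altSum v f ∧
    altSum v (fun b c d e => f d e b c) = altSum v f ∧
    altSum v (fun b c d e => f e d c b) = altSum v f :=
  ⟨altSum_perm_odd v f (τ := swap 2 3) (by decide),
    altSum_perm_odd v f (τ := swap 1 2) (by decide),
    altSum_perm_odd v f (τ := swap 1 3) (by decide),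
    altSum_perm_odd v f (τ := swap 0 1) (by decide),
    altSum_perm_odd v f (τ := ((swap 0 1).trans (swap 0 2)).trans (swap 0 3)) (by decide),
    altSum_perm_odd v f (τ := ((swap 0 1).trans (swap 1 2)).trans (swap 1 3)) (by decide),
    altSum_perm_odd v f (τ := ((swap 0 1).trans (swap 0 3)).trans (swap 1 2)) (by decide),
    altSum_perm_even v f (τ := (swap 1 2).trans (swap 1 3)) (by decide),
    altSum_perm_even v f (τ := (swap 1 2).trans (swap 2 3)) (by decide),
    altSum_perm_even v f (τ := (swap 0 1).trans (swap 2 3)) (by decide),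
    altSum_perm_even v f (τ := (swap 0 1).trans (swap 0 2)) (by decide),
    altSum_perm_even v f (τ := (swap 0 1).trans (swap 0 3)) (by decide),
    altSum_perm_even v f (τ := (swap 0 1).trans (swap 1 2)) (by decide),
    altSum_perm_even v f (τ := (swap 0 2).trans (swap 0 3)) (by decide),
    altSum_perm_even v f (τ := (swap 0 2).trans (swap 1 3)) (by decide),
    altSum_perm_even v f (τ := (swap 0 3).trans (swap 1 2)) (by decide)⟩

end Alternation

section Words

variable {A B : Type*} [AddCommGroup B]

/-- The combination of eleven terms that is alternated in `b, c, d, e`, for arbitrary functions in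
place of the three shapes of bracket monomials that occur in it. -/
def identitySummand (chain fork twin : A → A → A → A → A → A → B) (a b c d e : A) : B :=
  2 • chain a b a c d e - 2 • chain a b c a d e + 2 • chain a b c d a e - chain b c a d a e
    + chain b c d a a e + fork a b a c d e + 2 • fork a b c d a e + fork b c a d a e
    + twin a a b c d e - twin a b c d a e + twin b a c a d e

variable (T : A → A → A → A → A → A → B)

/-- The corner words, with values given by `T`, in the expansion of
`[[p, q]_∘, [r, [s, [t, u]_∘]_•]_∘]_•`. -/
def chainCorner (p q r s t u : A) : B :=
  T p r q s t u - T p r q s u t - T q r p s t u + T q r p s u t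

/-- The middle words, with values given by `T`, in the expansion of
`[[p, q]_∘, [r, [s, [t, u]_∘]_•]_∘]_•`. -/
def chainMiddle (p q r s t u : A) : B :=
  T q r p t u s - T q r p u t s - T p r q t u s + T p r q u t s

/-- The corner words, with values given by `T`, in the expansion of
`[[p, q]_∘, [[r, s]_∘, [t, u]_•]_∘]_•`. -/
def forkCorner (p q r s t u : A) : B :=
  T p r q t s u - T p r q u s t - T p s q t r u + T p s q u r t
    - T q r p t s u + T q r p u s t + T q s p t r u - T q s p u r t

/-- The corner words, with values given by `T`, in the expansion of
`[[p, [q, r]_∘]_∘, [s, [t, u]_•]_∘]_•`. -/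
def twinCorner (p q r s t u : A) : B :=
  T s q t u r p - T s q u t r p - T s r t u q p + T s r u t q p
    - T s p t u q r + T s p u t q r + T s p t u r q - T s p u t r q

/-- All corner words, with values given by `T`, in the summand of the identity. -/
def cornerSum : A → A → A → A → A → B :=
  identitySummand (chainCorner T) (forkCorner T) (twinCorner T)

/-- All middle words, with values given by `T`, in the summand of the identity. -/
def middleSum : A → A → A → A → A → B :=
  identitySummand (chainMiddle T) 0 0

theorem altSum_cornerSum (v : Fin 4 → A) (a : A) : altSum v (cornerSum T a) = 0 := by
  have reorder (f : A → A → A → A → B) := altSum_reorderings v f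
  unfold cornerSum identitySummand chainCorner forkCorner twinCorner
  simp only [altSum_add, altSum_sub, altSum_nsmul, reorder (T a a), reorder (fun b c => T a b c a),
    reorder (fun b c d => T a b c d a), reorder (fun b c d e => T a b c d e a),
    reorder (fun b => T b a a), reorder (fun b c => T b a c a), reorder (fun b c d => T b a c d a),
    reorder (fun b c d e => T b a c d e a), reorder (fun b c => T b c a a),
    reorder (fun b c d => T b c a d a), reorder (fun b c d e => T b c a d e a),
    reorder (fun b c d => T b c d a a), reorder (fun b c d e => T b c d a e a),
    reorder (fun b c d e => T b c d e a a)]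
  abel

theorem altSum_middleSum_add_altSum_middleSum_reverse (v : Fin 4 → A) (a : A) :
    altSum v (middleSum T a) + altSum v (middleSum (fun p q r s t u => T q p u s t r) a) = 0 := by
  have reorder (f : A → A → A → A → B) := altSum_reorderings v f
  unfold middleSum identitySummand chainMiddle
  simp only [Pi.zero_apply, smul_zero, add_zero, sub_zero, altSum_add, altSum_sub, altSum_nsmul,
    reorder (T a a), reorder (fun b c => T a b c a), reorder (fun b c d => T a b c d a),
    reorder (fun b c d e => T a b c d e a), reorder (fun b => T b a a),
    reorder (fun b c => T b a c a), reorder (fun b c d => T b a c d a),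
    reorder (fun b c => T b c a a), reorder (fun b c d => T b c a d a),
    reorder (fun b c d e => T b c a d e a), reorder (fun b c d e => T b c d a e a),
    reorder (fun b c d e => T b c d e a a)]
  abel

end Words

section Brackets

variable {R A : Type*} [CommRing R] [AddCommGroup A] [Module R A]

/-- Two associative products `mo` (written `∘` in comments) and `mb` (written `•`) satisfying the
interchange law. -/
structure IsInterchange (mo mb : A →ₗ[R] A →ₗ[R] A) : Prop where
  mo_assoc : ∀ x y z, mo (mo x y) z = mo x (mo y z)
  mb_assoc : ∀ x y z, mb (mb x y) z = mb x (mb y z)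
  interchange : ∀ w x y z, mb (mo w x) (mo y z) = mo (mb w y) (mb x z)

/-- The commutator bracket of a bilinear product. -/
def bracket (m : A →ₗ[R] A →ₗ[R] A) : A →ₗ[R] A →ₗ[R] A := m - m.flip

theorem bracket_apply (m : A →ₗ[R] A →ₗ[R] A) (x y : A) : bracket m x y = m x y - m y x := rfl

theorem bracket_flip (m : A →ₗ[R] A →ₗ[R] A) : bracket m.flip = -bracket m :=
  (neg_sub _ _).symm

/-- The sum of the values of `Φ` at the four pairs formed by `mo` or its opposite and `mb` or its
opposite, where reversing `mo` costs a sign and reversing `mb` does not: each bracket monomial of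
the identity contains three `∘`-brackets and two `•`-brackets. -/
def flipSum {B : Type*} [AddCommGroup B] (Φ : (A →ₗ[R] A →ₗ[R] A) → (A →ₗ[R] A →ₗ[R] A) → B)
    (mo mb : A →ₗ[R] A →ₗ[R] A) : B :=
  Φ mo mb - Φ mo.flip mb + Φ mo mb.flip - Φ mo.flip mb.flip

/-- The word `(p • q) ∘ (r • s • (t ∘ u))`. -/
def cornerWord (mo mb : A →ₗ[R] A →ₗ[R] A) (p q r s t u : A) : A :=
  mo (mb p q) (mb r (mb s (mo t u)))

/-- The word `(p • q) ∘ (r • (s ∘ t) • u)`. -/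
def middleWord (mo mb : A →ₗ[R] A →ₗ[R] A) (p q r s t u : A) : A :=
  mo (mb p q) (mb r (mb (mo s t) u))

/-- The bracket monomial `[[p, q]_∘, [r, [s, [t, u]_∘]_•]_∘]_•`. -/
def chainBracket (mo mb : A →ₗ[R] A →ₗ[R] A) (p q r s t u : A) : A :=
  bracket mb (bracket mo p q) (bracket mo r (bracket mb s (bracket mo t u)))

/-- The bracket monomial `[[p, q]_∘, [[r, s]_∘, [t, u]_•]_∘]_•`. -/
def forkBracket (mo mb : A →ₗ[R] A →ₗ[R] A) (p q r s t u : A) : A :=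
  bracket mb (bracket mo p q) (bracket mo (bracket mo r s) (bracket mb t u))

/-- The bracket monomial `[[p, [q, r]_∘]_∘, [s, [t, u]_•]_∘]_•`. -/
def twinBracket (mo mb : A →ₗ[R] A →ₗ[R] A) (p q r s t u : A) : A :=
  bracket mb (bracket mo p (bracket mo q r)) (bracket mo s (bracket mb t u))

theorem altSum_flipSum {B : Type*} [AddCommGroup B] (v : Fin 4 → A)
    (Φ : A → A → A → A → (A →ₗ[R] A →ₗ[R] A) → (A →ₗ[R] A →ₗ[R] A) → B)
    (mo mb : A →ₗ[R] A →ₗ[R] A) :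
    altSum v (fun b c d e => flipSum (Φ b c d e) mo mb) =
      flipSum (fun mo mb => altSum v fun b c d e => Φ b c d e mo mb) mo mb := by
  simp only [flipSum, altSum_add, altSum_sub]

namespace IsInterchange

variable {mo mb : A →ₗ[R] A →ₗ[R] A}

theorem flip_left (h : IsInterchange mo mb) : IsInterchange mo.flip mb where
  mo_assoc x y z := (h.mo_assoc z y x).symm
  mb_assoc := h.mb_assoc
  interchange w x y z := h.interchange x w z y

theorem flip_right (h : IsInterchange mo mb) : IsInterchange mo mb.flip where
  mo_assoc := h.mo_assoc
  mb_assoc x y z := (h.mb_assoc z y x).symm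
  interchange w x y z := h.interchange y z w x

theorem flipSum_congr (h : IsInterchange mo mb) {B : Type*} [AddCommGroup B]
    {Φ Ψ : (A →ₗ[R] A →ₗ[R] A) → (A →ₗ[R] A →ₗ[R] A) → B}
    (hΦ : ∀ mo mb, IsInterchange mo mb → Φ mo mb = Ψ mo mb) :
    flipSum Φ mo mb = flipSum Ψ mo mb := by
  simp only [flipSum, hΦ _ _ h, hΦ _ _ h.flip_left, hΦ _ _ h.flip_right,
    hΦ _ _ h.flip_left.flip_right]

theorem mo_mb_mo_eq_cornerWord (h : IsInterchange mo mb) (p q r s t u : A) :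
    mo (mb p (mo q t)) (mb r (mb s u)) = cornerWord mo mb p q r s t u := by
  rw [← h.mb_assoc r s u, ← h.interchange, h.mo_assoc, h.interchange, h.mb_assoc]
  rfl

theorem middleWord_flip_right (h : IsInterchange mo mb) (p q r s t u : A) :
    middleWord mo mb.flip p q r s t u = middleWord mo mb q p u s t r := by
  simp only [middleWord, LinearMap.flip_apply, h.mb_assoc]

theorem bracket_bracket_bracket (h : IsInterchange mo mb) (p q r s : A) :
    bracket mb (bracket mo p q) (bracket mo r s) =
      mo (mb p r) (mb q s) - mo (mb p s) (mb q r) - mo (mb q r) (mb p s) + mo (mb q s) (mb p r)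
        - mo (mb r p) (mb s q) + mo (mb s p) (mb r q) + mo (mb r q) (mb s p)
        - mo (mb s q) (mb r p) := by
  simp only [bracket_apply, map_sub, LinearMap.sub_apply, h.interchange]
  abel

theorem chainBracket_eq_flipSum (h : IsInterchange mo mb) (p q r s t u : A) :
    chainBracket mo mb p q r s t u =
      flipSum (fun mo mb => chainCorner (cornerWord mo mb) p q r s t u +
        chainMiddle (middleWord mo mb) p q r s t u) mo mb := by
  calc
    _ = flipSum (fun mo mb => mo (mb p r) (mb q (bracket mb s (bracket mo t u))) -
          mo (mb q r) (mb p (bracket mb s (bracket mo t u)))) mo mb := by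
      simp only [chainBracket, h.bracket_bracket_bracket, flipSum, LinearMap.flip_apply,
        bracket_flip, LinearMap.neg_apply, map_neg]
      abel
    _ = _ := h.flipSum_congr fun mo mb _ => by
      simp only [chainCorner, chainMiddle, cornerWord, middleWord, bracket_apply, map_sub]
      abel

theorem forkBracket_eq_flipSum (h : IsInterchange mo mb) (p q r s t u : A) :
    forkBracket mo mb p q r s t u =
      flipSum (fun mo mb => forkCorner (cornerWord mo mb) p q r s t u) mo mb := by
  calc
    _ = flipSum (fun mo mb => mo (mb p (bracket mo r s)) (mb q (bracket mb t u)) -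
          mo (mb q (bracket mo r s)) (mb p (bracket mb t u))) mo mb := by
      simp only [forkBracket, h.bracket_bracket_bracket, flipSum, LinearMap.flip_apply,
        bracket_flip, LinearMap.neg_apply, map_neg]
      abel
    _ = _ := h.flipSum_congr fun mo mb h => by
      simp only [forkCorner, ← h.mo_mb_mo_eq_cornerWord, bracket_apply, map_sub,
        LinearMap.sub_apply]
      abel

theorem twinBracket_eq_flipSum (h : IsInterchange mo mb) (p q r s t u : A) :
    twinBracket mo mb p q r s t u =
      flipSum (fun mo mb => twinCorner (cornerWord mo mb) p q r s t u) mo mb := by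
  calc
    _ = flipSum (fun mo mb => mo (mb s (bracket mo q r)) (mb (bracket mb t u) p) -
          mo (mb s p) (mb (bracket mb t u) (bracket mo q r))) mo mb := by
      simp only [twinBracket, h.bracket_bracket_bracket, flipSum, LinearMap.flip_apply,
        bracket_flip, LinearMap.neg_apply, map_neg]
      abel
    _ = _ := h.flipSum_congr fun mo mb h => by
      simp only [twinCorner, ← h.mo_mb_mo_eq_cornerWord _ _ _ _ _ p]
      simp only [cornerWord, bracket_apply, map_sub, LinearMap.sub_apply, h.mb_assoc]
      abel

theorem identitySummand_eq_flipSum (h : IsInterchange mo mb) (a b c d e : A) :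
    identitySummand (chainBracket mo mb) (forkBracket mo mb) (twinBracket mo mb) a b c d e =
      flipSum (fun mo mb => cornerSum (cornerWord mo mb) a b c d e +
        middleSum (middleWord mo mb) a b c d e) mo mb := by
  simp only [identitySummand, cornerSum, middleSum, h.chainBracket_eq_flipSum,
    h.forkBracket_eq_flipSum, h.twinBracket_eq_flipSum, flipSum, Pi.zero_apply]
  abel

theorem altSum_middleSum_flip_right (h : IsInterchange mo mb) (v : Fin 4 → A) (a : A) :
    altSum v (middleSum (middleWord mo mb.flip) a) =
      -altSum v (middleSum (middleWord mo mb) a) := by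
  have flip_eq_reverse :
      middleWord mo mb.flip = fun p q r s t u => middleWord mo mb q p u s t r := by
    funext p q r s t u
    exact h.middleWord_flip_right p q r s t u
  rw [flip_eq_reverse]
  exact eq_neg_of_add_eq_zero_right (altSum_middleSum_add_altSum_middleSum_reverse _ v a)

theorem altSum_identitySummand (h : IsInterchange mo mb) (v : Fin 4 → A) (a : A) :
    altSum v (identitySummand (chainBracket mo mb) (forkBracket mo mb) (twinBracket mo mb) a) =
      0 := by
  calc
    _ = flipSum (fun mo mb => altSum v (cornerSum (cornerWord mo mb) a) +
          altSum v (middleSum (middleWord mo mb) a)) mo mb := by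
      simp only [← altSum_add, ← altSum_flipSum, ← h.identitySummand_eq_flipSum]
    _ = 0 := by
      simp only [altSum_cornerSum, flipSum, h.altSum_middleSum_flip_right,
        h.flip_left.altSum_middleSum_flip_right]
      abel

end IsInterchange

end Brackets

theorem stmt_13_general {R A : Type*} [CommRing R] [AddCommGroup A] [Module R A]
    (mo mb : A →ₗ[R] A →ₗ[R] A)
    (oassoc : ∀ x y z : A, mo (mo x y) z = mo x (mo y z))
    (bassoc : ∀ x y z : A, mb (mb x y) z = mb x (mb y z))
    (interchange : ∀ w x y z : A, mb (mo w x) (mo y z) = mo (mb w y) (mb x z))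
    (lo lb : A → A → A)
    (hlo : ∀ x y : A, lo x y = mo x y - mo y x)
    (hlb : ∀ x y : A, lb x y = mb x y - mb y x)
    (a : A) (v : Fin 4 → A) :
    ∑ σ : Equiv.Perm (Fin 4),
      (Equiv.Perm.sign σ : ℤ) •
        ( 2 • lb (lo a (v (σ 0))) (lo a (lb (v (σ 1)) (lo (v (σ 2)) (v (σ 3)))))
        - 2 • lb (lo a (v (σ 0))) (lo (v (σ 1)) (lb a (lo (v (σ 2)) (v (σ 3)))))
        + 2 • lb (lo a (v (σ 0))) (lo (v (σ 1)) (lb (v (σ 2)) (lo a (v (σ 3)))))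
        - lb (lo (v (σ 0)) (v (σ 1))) (lo a (lb (v (σ 2)) (lo a (v (σ 3)))))
        + lb (lo (v (σ 0)) (v (σ 1))) (lo (v (σ 2)) (lb a (lo a (v (σ 3)))))
        + lb (lo a (v (σ 0))) (lo (lo a (v (σ 1))) (lb (v (σ 2)) (v (σ 3))))
        + 2 • lb (lo a (v (σ 0))) (lo (lo (v (σ 1)) (v (σ 2))) (lb a (v (σ 3))))
        + lb (lo (v (σ 0)) (v (σ 1))) (lo (lo a (v (σ 2))) (lb a (v (σ 3))))
        + lb (lo a (lo a (v (σ 0)))) (lo (v (σ 1)) (lb (v (σ 2)) (v (σ 3))))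
        - lb (lo a (lo (v (σ 0)) (v (σ 1)))) (lo (v (σ 2)) (lb a (v (σ 3))))
        + lb (lo (v (σ 0)) (lo a (v (σ 1)))) (lo a (lb (v (σ 2)) (v (σ 3)))) )
      = 0 := by
  obtain rfl : lo = fun x y => bracket mo x y := funext₂ hlo
  obtain rfl : lb = fun x y => bracket mb x y := funext₂ hlb
  exact IsInterchange.altSum_identitySummand ⟨oassoc, bassoc, interchange⟩ v a

/-- New degree-6 identity relating the two Lie brackets in an associative interchange
algebra: an alternating sum over all 24 permutations of (b,c,d,e). -/
theorem stmt_13 {F : Type*} [Field F] [CharZero F]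
    {A : Type*} [AddCommGroup A] [Module F A]
    (mo mb : A →ₗ[F] A →ₗ[F] A)
    (oassoc : ∀ x y z : A, mo (mo x y) z = mo x (mo y z))
    (bassoc : ∀ x y z : A, mb (mb x y) z = mb x (mb y z))
    (interchange : ∀ w x y z : A, mb (mo w x) (mo y z) = mo (mb w y) (mb x z))
    (lo lb : A → A → A)
    (hlo : ∀ x y : A, lo x y = mo x y - mo y x)
    (hlb : ∀ x y : A, lb x y = mb x y - mb y x)
    (a b c d e : A) (v : Fin 4 → A) (hv : v = ![b, c, d, e]) :
    ∑ σ : Equiv.Perm (Fin 4),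
      (Equiv.Perm.sign σ : ℤ) •
        ( 2 • lb (lo a (v (σ 0))) (lo a (lb (v (σ 1)) (lo (v (σ 2)) (v (σ 3)))))
        - 2 • lb (lo a (v (σ 0))) (lo (v (σ 1)) (lb a (lo (v (σ 2)) (v (σ 3)))))
        + 2 • lb (lo a (v (σ 0))) (lo (v (σ 1)) (lb (v (σ 2)) (lo a (v (σ 3)))))
        - lb (lo (v (σ 0)) (v (σ 1))) (lo a (lb (v (σ 2)) (lo a (v (σ 3)))))
        + lb (lo (v (σ 0)) (v (σ 1))) (lo (v (σ 2)) (lb a (lo a (v (σ 3)))))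
        + lb (lo a (v (σ 0))) (lo (lo a (v (σ 1))) (lb (v (σ 2)) (v (σ 3))))
        + 2 • lb (lo a (v (σ 0))) (lo (lo (v (σ 1)) (v (σ 2))) (lb a (v (σ 3))))
        + lb (lo (v (σ 0)) (v (σ 1))) (lo (lo a (v (σ 2))) (lb a (v (σ 3))))
        + lb (lo a (lo a (v (σ 0)))) (lo (v (σ 1)) (lb (v (σ 2)) (v (σ 3))))
        - lb (lo a (lo (v (σ 0)) (v (σ 1)))) (lo (v (σ 2)) (lb a (v (σ 3))))
        + lb (lo (v (σ 0)) (lo a (v (σ 1)))) (lo a (lb (v (σ 2)) (v (σ 3)))) )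
      = 0 :=
  stmt_13_general mo mb oassoc bassoc interchange lo lb hlo hlb a v
end

section
/- Let A be an associative interchange algebra over a field F of characteristic 0, with Lie brackets [x,y]_∘ = x∘y − y∘x and [x,y]_• = x•y − y•x. Then for all a, b, c, d, e, f, g in A the following alternating sum over all 5040 permutations σ of the ordered list (a,b,c,d,e,f,g), with sign ε(σ), vanishes: Σ_σ ε(σ) ( [[a^σ,b^σ]_∘, [[c^σ,d^σ]_•, [e^σ,[f^σ,g^σ]_∘]_•]_∘]_• + [[a^σ,b^σ]_∘, [[c^σ,d^σ]_•, [e^σ,[f^σ,g^σ]_•]_∘]_∘]_• − [[a^σ,b^σ]_•, [[c^σ,d^σ]_∘, [e^σ,[f^σ,g^σ]_∘]_•]_•]_∘ − [[a^σ,b^σ]_•, [[c^σ,d^σ]_∘, [e^σ,[f^σ,g^σ]_•]_∘]_•]_∘ ) = 0, where (a^σ,...,g^σ) denotes the image of (a,...,g) under σ. -/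
/-! The sum is computed in the Grassmann envelope `A ⊗ Λ(R^ι)`: the value of a multilinear monomial
of degree `n` at the generic odd element `x = ∑ vᵢ ⊗ ξᵢ` has the alternating sum of that monomial as
its coefficient at `ξ₁ ⋯ ξₙ`. The envelope satisfies the interchange law up to the Koszul sign. With
`p = x ∘ x`, `q = x • x` and `u = [x, p]_• + [x, q]_∘`, the four terms of the sum at `x` add up to
`8 ([p, [q, u]_∘]_• - [q, [p, u]_•]_∘)`. Repeated interchange, together with `q ∘ q = -(p • p)`,
shows that both brackets are equal to `-[p, (q ∘ q) ∘ x + x ∘ (q ∘ q)]_•`. -/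

section Commutator

variable {R M : Type*} [CommRing R] [AddCommGroup M] [Module R M]

/-- The commutator `m x y - m y x` of a bilinear product `m`. -/
def bilinCommutator (m : M →ₗ[R] M →ₗ[R] M) : M →ₗ[R] M →ₗ[R] M :=
  m - m.flip

theorem bilinCommutator_apply (m : M →ₗ[R] M →ₗ[R] M) (x y : M) :
    bilinCommutator m x y = m x y - m y x :=
  rfl

end Commutator

local notation "⁅" a "," b "⁆[" m "]" => bilinCommutator m a b

/-- Interchange superalgebras: `ℤ/2`-graded modules with two associative products `mo`, `mb`
satisfying the interchange law with the Koszul sign for exchanging the two inner arguments. Only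
those two need to be homogeneous, and the homogeneous parts `𝒮 i` need not span. -/
structure IsInterchangeSuperalgebra {R S : Type*} [CommRing R] [AddCommGroup S] [Module R S]
    (mo mb : S →ₗ[R] S →ₗ[R] S) (𝒮 : ZMod 2 → Submodule R S) : Prop where
  circ_assoc (a b c : S) : mo (mo a b) c = mo a (mo b c)
  bullet_assoc (a b c : S) : mb (mb a b) c = mb a (mb b c)
  circ_mem {i j : ZMod 2} {a b : S} : a ∈ 𝒮 i → b ∈ 𝒮 j → mo a b ∈ 𝒮 (i + j)
  bullet_mem {i j : ZMod 2} {a b : S} : a ∈ 𝒮 i → b ∈ 𝒮 j → mb a b ∈ 𝒮 (i + j)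
  interchange {i j : ZMod 2} {b c : S} (a d : S) : b ∈ 𝒮 i → c ∈ 𝒮 j →
    mb (mo a b) (mo c d) = (-1 : ℤˣ) ^ (i * j) • mo (mb a c) (mb b d)

namespace IsInterchangeSuperalgebra

variable {R S : Type*} [CommRing R] [AddCommGroup S] [Module R S]
  {mo mb : S →ₗ[R] S →ₗ[R] S} {𝒮 : ZMod 2 → Submodule R S}

local notation:70 a:71 "⊚" b:70 => mo a b
local notation:70 a:71 "⊙" b:70 => mb a b

theorem symm (h : IsInterchangeSuperalgebra mo mb 𝒮) : IsInterchangeSuperalgebra mb mo 𝒮 where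
  circ_assoc := h.bullet_assoc
  bullet_assoc := h.circ_assoc
  circ_mem := h.bullet_mem
  bullet_mem := h.circ_mem
  interchange {i j} _ _ a d hb hc := by
    rw [h.interchange a d hc hb, smul_smul, mul_comm j i, Int.units_mul_self, one_smul]

theorem flip (h : IsInterchangeSuperalgebra mo mb 𝒮) :
    IsInterchangeSuperalgebra mo.flip mb.flip 𝒮 where
  circ_assoc a b c := (h.circ_assoc c b a).symm
  bullet_assoc a b c := (h.bullet_assoc c b a).symm
  circ_mem {i j} _ _ ha hb := add_comm j i ▸ h.circ_mem hb ha
  bullet_mem {i j} _ _ ha hb := add_comm j i ▸ h.bullet_mem hb ha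
  interchange {i j} _ _ a d hb hc := mul_comm j i ▸ h.interchange d a hc hb

theorem interchange_odd_odd (h : IsInterchangeSuperalgebra mo mb 𝒮) {b c : S} (a d : S)
    (hb : b ∈ 𝒮 1) (hc : c ∈ 𝒮 1) : (a⊚b)⊙(c⊚d) = -((a⊙c)⊚(b⊙d)) := by
  simpa using h.interchange a d hb hc

theorem interchange_even_left (h : IsInterchangeSuperalgebra mo mb 𝒮) {j : ZMod 2} {b c : S}
    (a d : S) (hb : b ∈ 𝒮 0) (hc : c ∈ 𝒮 j) : (a⊚b)⊙(c⊚d) = (a⊙c)⊚(b⊙d) := by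
  simpa using h.interchange a d hb hc

theorem interchange_even_right (h : IsInterchangeSuperalgebra mo mb 𝒮) {i : ZMod 2} {b c : S}
    (a d : S) (hb : b ∈ 𝒮 i) (hc : c ∈ 𝒮 0) : (a⊚b)⊙(c⊚d) = (a⊙c)⊚(b⊙d) := by
  simpa using h.interchange a d hb hc

variable {x p q : S}

theorem circ_self_mem_even (h : IsInterchangeSuperalgebra mo mb 𝒮) (hx : x ∈ 𝒮 1) :
    x⊚x ∈ 𝒮 0 :=
  h.circ_mem hx hx

theorem bullet_sq_circ (h : IsInterchangeSuperalgebra mo mb 𝒮) (hx : x ∈ 𝒮 1)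
    (hp : p = x⊚x) (hq : q = x⊙x) : q⊚(x⊙p) = -(p⊙(x⊚p)) := by
  rw [hq, h.symm.interchange_odd_odd x p hx hx, ← hp]

theorem circ_bullet_sq (h : IsInterchangeSuperalgebra mo mb 𝒮) (hx : x ∈ 𝒮 1)
    (hp : p = x⊚x) (hq : q = x⊙x) : (x⊙p)⊚q = p⊙(x⊚p) := by
  have hp0 : p ∈ 𝒮 0 := hp ▸ h.circ_self_mem_even hx
  have cube : p⊚x = x⊚p := by rw [hp, h.circ_assoc]
  rw [hq, h.symm.interchange_even_left x x hp0 hx, ← hp, cube]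

theorem commutator_bullet_sq_commutator_circ_sq (h : IsInterchangeSuperalgebra mo mb 𝒮)
    (hx : x ∈ 𝒮 1) (hp : p = x⊚x) (hq : q = x⊙x) :
    ⁅q, ⁅x, p⁆[mb]⁆[mo] = -((2 : ℤ) • (p⊙(x⊚p) + (x⊚p)⊙p)) := by
  have cube : p⊚x = x⊚p := by rw [hp, h.circ_assoc]
  have left : (p⊙x)⊚q = -((p⊚x)⊙p) := h.flip.bullet_sq_circ hx hp hq
  have right : q⊚(p⊙x) = (p⊚x)⊙p := h.flip.circ_bullet_sq hx hp hq
  simp only [bilinCommutator_apply, map_sub, left, right, cube,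
    h.bullet_sq_circ hx hp hq, h.circ_bullet_sq hx hp hq]
  module

theorem circ_self_bullet_sq (h : IsInterchangeSuperalgebra mo mb 𝒮) (hx : x ∈ 𝒮 1)
    (hp : p = x⊚x) (hq : q = x⊙x) : q⊚q = -(p⊙p) := by
  rw [hp, h.interchange_odd_odd x x hx hx, neg_neg, hq]

theorem circ_sq_bullet_sandwich (h : IsInterchangeSuperalgebra mo mb 𝒮) (hx : x ∈ 𝒮 1)
    (hp : p = x⊚x) (hq : q = x⊙x) : p⊙(q⊚x⊚q) = p⊙p⊙(x⊚p) := by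
  have hq0 : q ∈ 𝒮 0 := hq ▸ h.symm.circ_self_mem_even hx
  have hqx : q⊚x ∈ 𝒮 1 := h.circ_mem hq0 hx
  have cube : x⊙q = q⊙x := by rw [hq, h.bullet_assoc]
  calc p⊙(q⊚x⊚q) = (x⊚x)⊙((q⊚x)⊚q) := by rw [hp, h.circ_assoc]
    _ = -((x⊙(q⊚x))⊚(q⊙x)) := by rw [h.interchange_odd_odd x q hx hqx, cube]
    _ = -((x⊚q)⊙(q⊚p)) := by
      rw [h.symm.interchange_even_right x x hqx hq0, h.circ_assoc, ← hp]
    _ = -((q⊙x)⊚(q⊙p)) := by rw [h.interchange_even_left x p hq0 hq0, cube]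
    _ = -((q⊚q)⊙(x⊚p)) := by rw [h.symm.interchange_even_right q p hx hq0]
    _ = p⊙p⊙(x⊚p) := by
      rw [h.circ_self_bullet_sq hx hp hq, map_neg, LinearMap.neg_apply, neg_neg, h.bullet_assoc]

theorem commutator_circ_sq_commutator_bullet_sq_cubic (h : IsInterchangeSuperalgebra mo mb 𝒮)
    (hx : x ∈ 𝒮 1) (hp : p = x⊚x) (hq : q = x⊙x) :
    ⁅p, ⁅q, ⁅x, p⁆[mb] + ⁅x, q⁆[mo]⁆[mo]⁆[mb] = -⁅p, (q⊚q)⊚x + x⊚q⊚q⁆[mb] := by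
  have cube : p⊚x = x⊚p := by rw [hp, h.circ_assoc]
  have left : p⊙(q⊚x⊚q) = p⊙p⊙(x⊚p) := h.circ_sq_bullet_sandwich hx hp hq
  have right : (q⊚x⊚q)⊙p = (x⊚p)⊙p⊙p := by
    have := h.flip.circ_sq_bullet_sandwich hx hp hq
    simpa only [LinearMap.flip_apply, h.circ_assoc, h.bullet_assoc, cube] using this
  rw [map_add (bilinCommutator mo q), h.commutator_bullet_sq_commutator_circ_sq hx hp hq]
  simp only [bilinCommutator_apply, map_add, map_sub, map_neg, map_zsmul,
    h.circ_assoc, h.bullet_assoc, left, right]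
  module

theorem commutator_circ_sq_circ_add_circ (h : IsInterchangeSuperalgebra mo mb 𝒮) {r : S}
    (hx : x ∈ 𝒮 1) (hr : r ∈ 𝒮 0) (hp : p = x⊚x) (hq : q = x⊙x) :
    ⁅p, r⊚x + x⊚r⁆[mb] = -⁅q, r⊙x + x⊙r⁆[mo] := by
  have expand_left : p⊙(r⊚x) = (x⊙r)⊚q ∧ p⊙(x⊚r) = -(q⊚(x⊙r)) :=
    ⟨by rw [hp, h.interchange_even_right x x hx hr, hq],
      by rw [hp, h.interchange_odd_odd x r hx hx, hq]⟩
  have expand_right : (r⊚x)⊙p = -((r⊙x)⊚q) ∧ (x⊚r)⊙p = q⊚(r⊙x) :=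
    ⟨by rw [hp, h.interchange_odd_odd r x hx hx, hq],
      by rw [hp, h.interchange_even_left x x hr hx, hq]⟩
  simp only [bilinCommutator_apply, map_add, expand_left, expand_right]
  abel

theorem commutator_commutator_cubic_symm (h : IsInterchangeSuperalgebra mo mb 𝒮) (hx : x ∈ 𝒮 1)
    (hp : p = x⊚x) (hq : q = x⊙x) :
    ⁅p, ⁅q, ⁅x, p⁆[mb] + ⁅x, q⁆[mo]⁆[mo]⁆[mb] = ⁅q, ⁅p, ⁅x, p⁆[mb] + ⁅x, q⁆[mo]⁆[mb]⁆[mo] := by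
  have hq0 : q ∈ 𝒮 0 := hq ▸ h.symm.circ_self_mem_even hx
  calc ⁅p, ⁅q, ⁅x, p⁆[mb] + ⁅x, q⁆[mo]⁆[mo]⁆[mb] = -⁅p, (q⊚q)⊚x + x⊚q⊚q⁆[mb] :=
        h.commutator_circ_sq_commutator_bullet_sq_cubic hx hp hq
    _ = ⁅q, (q⊚q)⊙x + x⊙(q⊚q)⁆[mo] := by
        rw [h.commutator_circ_sq_circ_add_circ hx (h.circ_mem hq0 hq0) hp hq, neg_neg]
    _ = -⁅q, (p⊙p)⊙x + x⊙p⊙p⁆[mo] := by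
        simp only [h.circ_self_bullet_sq hx hp hq, map_neg, LinearMap.neg_apply, map_add, neg_add]
    _ = ⁅q, ⁅p, ⁅x, p⁆[mb] + ⁅x, q⁆[mo]⁆[mb]⁆[mo] := by
        rw [← h.symm.commutator_circ_sq_commutator_bullet_sq_cubic hx hq hp, add_comm]

end IsInterchangeSuperalgebra

section GrassmannEnvelope

open TensorProduct ExteriorAlgebra

variable {R A N : Type*} [CommRing R] [AddCommGroup A] [Module R A] [AddCommGroup N] [Module R N]

variable (N) in
/-- The `R`-bilinear extension of `m` to `A ⊗ Λ(N)`: `(a ⊗ ω) (b ⊗ η) = m a b ⊗ ω η`. -/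
noncomputable def grassmannExtension (m : A →ₗ[R] A →ₗ[R] A) :
    A ⊗[R] ExteriorAlgebra R N →ₗ[R] A ⊗[R] ExteriorAlgebra R N →ₗ[R]
      A ⊗[R] ExteriorAlgebra R N :=
  TensorProduct.map₂ m (LinearMap.mul R (ExteriorAlgebra R N))

theorem grassmannExtension_tmul (m : A →ₗ[R] A →ₗ[R] A) (a b : A) (ω η : ExteriorAlgebra R N) :
    grassmannExtension N m (a ⊗ₜ ω) (b ⊗ₜ η) = m a b ⊗ₜ (ω * η) :=
  rfl

variable (R A N) in
/-- The even (`i = 0`) and odd (`i = 1`) parts of `A ⊗ Λ(N)`, with `A` in even degree. -/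
def grassmannParity (i : ZMod 2) : Submodule R (A ⊗[R] ExteriorAlgebra R N) :=
  Submodule.span R {z | ∃ a, ∃ ω ∈ CliffordAlgebra.evenOdd (0 : QuadraticForm R N) i, a ⊗ₜ ω = z}

theorem exteriorAlgebra_mul_comm_of_mem_evenOdd {i j : ZMod 2} {ω η : ExteriorAlgebra R N}
    (hω : ω ∈ CliffordAlgebra.evenOdd (0 : QuadraticForm R N) i)
    (hη : η ∈ CliffordAlgebra.evenOdd (0 : QuadraticForm R N) j) :
    ω * η = (-1 : ℤˣ) ^ (i * j) • (η * ω) := by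
  have := CliffordAlgebra.map_mul_map_of_isOrtho_of_mem_evenOdd
    (QuadraticMap.Isometry.id (0 : QuadraticForm R N)) (QuadraticMap.Isometry.id 0)
    (fun x y => by simp [QuadraticMap.isOrtho_def]) ω η hω hη
  simpa [mul_comm j i] using this

theorem grassmannExtension_assoc {m : A →ₗ[R] A →ₗ[R] A}
    (assoc : ∀ x y z, m (m x y) z = m x (m y z)) (x y z : A ⊗[R] ExteriorAlgebra R N) :
    grassmannExtension N m (grassmannExtension N m x y) z =
      grassmannExtension N m x (grassmannExtension N m y z) := by
  induction x with
  | zero => simp only [map_zero, LinearMap.zero_apply]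
  | add x x' hx hx' => simp only [map_add, LinearMap.add_apply, hx, hx']
  | tmul a ω =>
    induction y with
    | zero => simp only [map_zero, LinearMap.zero_apply]
    | add y y' hy hy' => simp only [map_add, LinearMap.add_apply, hy, hy']
    | tmul b η =>
      induction z with
      | zero => simp only [map_zero]
      | add z z' hz hz' => simp only [map_add, hz, hz']
      | tmul c θ => simp only [grassmannExtension_tmul, assoc, mul_assoc]

theorem grassmannExtension_mem_parity (m : A →ₗ[R] A →ₗ[R] A) {i j : ZMod 2}
    {x y : A ⊗[R] ExteriorAlgebra R N} (hx : x ∈ grassmannParity R A N i)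
    (hy : y ∈ grassmannParity R A N j) :
    grassmannExtension N m x y ∈ grassmannParity R A N (i + j) := by
  have h := Submodule.apply_mem_map₂ (grassmannExtension N m) hx hy
  rw [grassmannParity, grassmannParity, Submodule.map₂_span_span] at h
  refine Submodule.span_mono ?_ h
  rintro _ ⟨_, ⟨a, ω, hω, rfl⟩, _, ⟨b, η, hη, rfl⟩, rfl⟩
  exact ⟨m a b, ω * η, SetLike.mul_mem_graded hω hη, rfl⟩

theorem grassmannExtension_interchange {mo mb : A →ₗ[R] A →ₗ[R] A}
    (interchange : ∀ w x y z, mb (mo w x) (mo y z) = mo (mb w y) (mb x z)) {i j : ZMod 2}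
    {b c : A ⊗[R] ExteriorAlgebra R N} (a d : A ⊗[R] ExteriorAlgebra R N)
    (hb : b ∈ grassmannParity R A N i) (hc : c ∈ grassmannParity R A N j) :
    grassmannExtension N mb (grassmannExtension N mo a b) (grassmannExtension N mo c d) =
      (-1 : ℤˣ) ^ (i * j) • grassmannExtension N mo (grassmannExtension N mb a c)
        (grassmannExtension N mb b d) := by
  induction a with
  | zero => simp only [map_zero, LinearMap.zero_apply, smul_zero]
  | add a a' ha ha' => simp only [map_add, LinearMap.add_apply, ha, ha', smul_add]
  | tmul a α =>
    induction d with
    | zero => simp only [map_zero, smul_zero]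
    | add d d' hd hd' => simp only [map_add, hd, hd', smul_add]
    | tmul d δ =>
      induction hb using Submodule.span_induction with
      | zero => simp only [map_zero, LinearMap.zero_apply, smul_zero]
      | add b b' _ _ hb hb' => simp only [map_add, LinearMap.add_apply, hb, hb', smul_add]
      | smul r b _ hb => simp only [map_smul, LinearMap.smul_apply, hb, smul_comm r]
      | mem b hb =>
        obtain ⟨b, β, hβ, rfl⟩ := hb
        induction hc using Submodule.span_induction with
        | zero => simp only [map_zero, LinearMap.zero_apply, smul_zero]
        | add c c' _ _ hc hc' => simp only [map_add, LinearMap.add_apply, hc, hc', smul_add]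
        | smul r c _ hc => simp only [map_smul, LinearMap.smul_apply, hc, smul_comm r]
        | mem c hc =>
          obtain ⟨c, γ, hγ, rfl⟩ := hc
          simp only [grassmannExtension_tmul, interchange]
          have : α * β * (γ * δ) = (-1 : ℤˣ) ^ (i * j) • (α * γ * (β * δ)) := by
            rw [mul_assoc, ← mul_assoc β, exteriorAlgebra_mul_comm_of_mem_evenOdd hβ hγ]
            simp only [smul_mul_assoc, mul_smul_comm, mul_assoc]
          rw [this]
          exact tmul_smul _ _ _

theorem isInterchangeSuperalgebra_grassmannExtension {mo mb : A →ₗ[R] A →ₗ[R] A}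
    (circ_assoc : ∀ x y z, mo (mo x y) z = mo x (mo y z))
    (bullet_assoc : ∀ x y z, mb (mb x y) z = mb x (mb y z))
    (interchange : ∀ w x y z, mb (mo w x) (mo y z) = mo (mb w y) (mb x z)) :
    IsInterchangeSuperalgebra (grassmannExtension N mo) (grassmannExtension N mb)
      (grassmannParity R A N) where
  circ_assoc := grassmannExtension_assoc circ_assoc
  bullet_assoc := grassmannExtension_assoc bullet_assoc
  circ_mem := grassmannExtension_mem_parity mo
  bullet_mem := grassmannExtension_mem_parity mb
  interchange := grassmannExtension_interchange interchange

end GrassmannEnvelope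

section GrassmannSum

open TensorProduct ExteriorAlgebra

variable {R A ι : Type*} [CommRing R] [AddCommGroup A] [Module R A] [DecidableEq ι]

variable (R) in
/-- The monomial `ξ_{φ 0} ⋯ ξ_{φ (n - 1)}` in the standard generators of `Λ(R^ι)`. -/
noncomputable def grassmannMonomial {n : ℕ} (φ : Fin n → ι) : ExteriorAlgebra R (ι → R) :=
  ιMulti R n fun k => Pi.single (φ k) 1

theorem grassmannMonomial_append {m n : ℕ} (φ : Fin m → ι) (ψ : Fin n → ι) :
    grassmannMonomial R (Fin.append φ ψ) = grassmannMonomial R φ * grassmannMonomial R ψ := by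
  rw [grassmannMonomial, grassmannMonomial, grassmannMonomial, ιMulti_mul_ιMulti]
  congr 1
  ext1 k
  refine Fin.addCases (fun k => ?_) (fun k => ?_) k <;> simp

theorem grassmannMonomial_mem_evenOdd {n : ℕ} (φ : Fin n → ι) :
    grassmannMonomial R φ ∈ CliffordAlgebra.evenOdd (0 : QuadraticForm R (ι → R)) n := by
  have h := SetLike.list_prod_ofFn_mem_graded
    (A := CliffordAlgebra.evenOdd (0 : QuadraticForm R (ι → R))) (fun _ : Fin n => 1)
    (fun k => ExteriorAlgebra.ι R (Pi.single (φ k) 1))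
    fun k => CliffordAlgebra.ι_mem_evenOdd_one _ _
  simpa [grassmannMonomial, ιMulti_apply] using h

theorem grassmannMonomial_mul_comm {m n : ℕ} (φ : Fin m → ι) (ψ : Fin n → ι) :
    grassmannMonomial R ψ * grassmannMonomial R φ =
      (-1 : ℤˣ) ^ (m * n) • grassmannMonomial R (Fin.append φ ψ) := by
  rw [exteriorAlgebra_mul_comm_of_mem_evenOdd (grassmannMonomial_mem_evenOdd ψ)
    (grassmannMonomial_mem_evenOdd φ), grassmannMonomial_append, ← Nat.cast_mul, uzpow_natCast,
    mul_comm n m]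

theorem grassmannMonomial_of_not_injective {n : ℕ} {φ : Fin n → ι} (hφ : ¬ Function.Injective φ) :
    grassmannMonomial R φ = 0 :=
  (ιMulti (M := ι → R) R n).map_eq_zero_of_not_injective _ fun h =>
    hφ (Function.Injective.of_comp (f := fun i => Pi.single i (1 : R)) h)

theorem grassmannMonomial_comp_perm {n : ℕ} (φ : Fin n → ι) (σ : Equiv.Perm (Fin n)) :
    grassmannMonomial R (φ ∘ σ) = Equiv.Perm.sign σ • grassmannMonomial R φ :=
  (ιMulti R n).map_perm (fun k => Pi.single (φ k) 1) σ

variable [Fintype ι]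

variable (R) in
/-- The element `∑ Φ φ ⊗ ξ_{φ 0} ⋯ ξ_{φ (n - 1)}` of `A ⊗ Λ(R^ι)`, with `φ` ranging over all words
of length `n`. If `Φ φ` is a multilinear monomial in `v (φ 0), …, v (φ (n - 1))`, this is the value
of that monomial at the generic odd element `∑ v i ⊗ ξ_i`. -/
noncomputable def grassmannSum {n : ℕ} (Φ : (Fin n → ι) → A) :
    A ⊗[R] ExteriorAlgebra R (ι → R) :=
  ∑ φ, Φ φ ⊗ₜ grassmannMonomial R φ

variable (R) in
/-- The generic odd element `∑ v i ⊗ ξ_i` of `A ⊗ Λ(R^ι)`. -/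
noncomputable def genericOddElement (v : ι → A) : A ⊗[R] ExteriorAlgebra R (ι → R) :=
  grassmannSum R fun φ : Fin 1 → ι => v (φ 0)

theorem grassmannSum_add {n : ℕ} (Φ Ψ : (Fin n → ι) → A) :
    grassmannSum R (fun φ => Φ φ + Ψ φ) = grassmannSum R Φ + grassmannSum R Ψ := by
  simp only [grassmannSum, add_tmul, Finset.sum_add_distrib]

theorem grassmannSum_sub {n : ℕ} (Φ Ψ : (Fin n → ι) → A) :
    grassmannSum R (fun φ => Φ φ - Ψ φ) = grassmannSum R Φ - grassmannSum R Ψ := by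
  simp only [grassmannSum, sub_tmul, Finset.sum_sub_distrib]

theorem grassmannSum_mem_parity {n : ℕ} (Φ : (Fin n → ι) → A) :
    grassmannSum R Φ ∈ grassmannParity R A (ι → R) n :=
  Submodule.sum_mem _ fun φ _ =>
    Submodule.subset_span ⟨Φ φ, _, grassmannMonomial_mem_evenOdd φ, rfl⟩

theorem genericOddElement_mem_parity (v : ι → A) :
    genericOddElement R v ∈ grassmannParity R A (ι → R) 1 := by
  simpa only [genericOddElement, Nat.cast_one] using
    grassmannSum_mem_parity fun φ : Fin 1 → ι => v (φ 0)

theorem grassmannSum_append {m n : ℕ} (Φ : (Fin (m + n) → ι) → A) :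
    grassmannSum R Φ = ∑ φ : Fin m → ι, ∑ ψ : Fin n → ι,
      Φ (Fin.append φ ψ) ⊗ₜ grassmannMonomial R (Fin.append φ ψ) := by
  rw [grassmannSum, ← (Fin.appendEquiv m n).sum_comp, Fintype.sum_prod_type]
  rfl

theorem grassmannSum_commutator {m n : ℕ} (μ : A →ₗ[R] A →ₗ[R] A) (Φ : (Fin m → ι) → A)
    (Ψ : (Fin n → ι) → A) :
    grassmannSum R (fun φ : Fin (m + n) → ι =>
        ⁅Φ (φ ∘ Fin.castAdd n), Ψ (φ ∘ Fin.natAdd m)⁆[μ]) =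
      grassmannExtension _ μ (grassmannSum R Φ) (grassmannSum R Ψ) -
        (-1 : ℤˣ) ^ (m * n) • grassmannExtension _ μ (grassmannSum R Ψ) (grassmannSum R Φ) := by
  have product : grassmannExtension _ μ (grassmannSum R Φ) (grassmannSum R Ψ) =
      ∑ φ, ∑ ψ, μ (Φ φ) (Ψ ψ) ⊗ₜ grassmannMonomial R (Fin.append φ ψ) := by
    simp only [grassmannSum, map_sum, LinearMap.sum_apply, grassmannExtension_tmul,
      grassmannMonomial_append]
    exact Finset.sum_comm
  have swapped : grassmannExtension _ μ (grassmannSum R Ψ) (grassmannSum R Φ) =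
      (-1 : ℤˣ) ^ (m * n) •
        ∑ φ, ∑ ψ, μ (Ψ ψ) (Φ φ) ⊗ₜ grassmannMonomial R (Fin.append φ ψ) := by
    simp only [grassmannSum, map_sum, LinearMap.sum_apply, grassmannExtension_tmul,
      grassmannMonomial_mul_comm, tmul_smul, Finset.smul_sum]
    rfl
  rw [product, swapped, smul_smul, Int.units_mul_self, one_smul, grassmannSum_append]
  simp only [← Finset.sum_sub_distrib, ← sub_tmul, bilinCommutator_apply, Function.comp_def,
    Fin.append_left, Fin.append_right]

theorem grassmannSum_commutator_of_even {m n : ℕ} (hmn : Even (m * n)) (μ : A →ₗ[R] A →ₗ[R] A)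
    (Φ : (Fin m → ι) → A) (Ψ : (Fin n → ι) → A) :
    grassmannSum R (fun φ : Fin (m + n) → ι =>
        ⁅Φ (φ ∘ Fin.castAdd n), Ψ (φ ∘ Fin.natAdd m)⁆[μ]) =
      ⁅grassmannSum R Φ, grassmannSum R Ψ⁆[grassmannExtension _ μ] := by
  rw [grassmannSum_commutator, hmn.neg_one_pow, one_smul, bilinCommutator_apply]

theorem grassmannSum_commutator_self_of_odd {n : ℕ} (hn : Odd n) (μ : A →ₗ[R] A →ₗ[R] A)
    (Φ : (Fin n → ι) → A) :
    grassmannSum R (fun φ : Fin (n + n) → ι =>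
        ⁅Φ (φ ∘ Fin.castAdd n), Φ (φ ∘ Fin.natAdd n)⁆[μ]) =
      (2 : ℤ) • grassmannExtension _ μ (grassmannSum R Φ) (grassmannSum R Φ) := by
  rw [grassmannSum_commutator, (hn.mul hn).neg_one_pow, Units.neg_smul, one_smul, sub_neg_eq_add,
    two_smul]

theorem grassmannSum_eq_sum_sign_smul_tmul {n : ℕ} (Φ : (Fin n → Fin n) → A) :
    grassmannSum R Φ =
      (∑ σ : Equiv.Perm (Fin n), (Equiv.Perm.sign σ : ℤ) • Φ σ) ⊗ₜ grassmannMonomial R id := by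
  rw [grassmannSum, sum_tmul]
  symm
  refine Finset.sum_of_injOn (fun σ => ⇑σ) DFunLike.coe_injective.injOn
    (fun _ _ => Finset.mem_coe.2 (Finset.mem_univ _)) (fun φ _ hφ => ?_) fun σ _ => ?_
  · have not_injective : ¬ Function.Injective φ := fun inj =>
      hφ ⟨.ofBijective φ (Finite.injective_iff_bijective.1 inj), by simp⟩
    rw [grassmannMonomial_of_not_injective not_injective, tmul_zero]
  · have monomial_perm := grassmannMonomial_comp_perm (R := R) id σ
    rw [Function.id_comp] at monomial_perm
    rw [monomial_perm, Units.smul_def, smul_tmul, tmul_smul]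

theorem exists_linearMap_grassmannMonomial_id_eq_one (R : Type*) [CommRing R] (n : ℕ) :
    ∃ f : ExteriorAlgebra R (Fin n → R) →ₗ[R] R, f (grassmannMonomial R id) = 1 := by
  refine ⟨liftAlternating (Pi.single n Matrix.detRowAlternating), ?_⟩
  rw [grassmannMonomial, liftAlternating_apply_ιMulti, Pi.single_eq_same]
  have : (fun k => Pi.single (id k) (1 : R)) = (1 : Matrix (Fin n) (Fin n) R) := by
    ext i j
    simp [Matrix.one_apply, Pi.single_apply, eq_comm]
  rw [this]
  exact Matrix.det_one

theorem sum_sign_smul_eq_zero_of_grassmannSum_eq_zero {n : ℕ} {Φ : (Fin n → Fin n) → A}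
    (h : grassmannSum R Φ = 0) : ∑ σ : Equiv.Perm (Fin n), (Equiv.Perm.sign σ : ℤ) • Φ σ = 0 := by
  obtain ⟨f, hf⟩ := exists_linearMap_grassmannMonomial_id_eq_one R n
  have := congrArg (fun z => TensorProduct.rid R A (f.lTensor A z)) h
  simpa only [grassmannSum_eq_sum_sign_smul_tmul, LinearMap.lTensor_tmul, hf,
    TensorProduct.rid_tmul, one_smul, map_zero] using this

end GrassmannSum

section SepticIdentity

open TensorProduct

variable {R A : Type*} [CommRing R] [AddCommGroup A] [Module R A]

/-- The multilinear Lie polynomial `[[a,b]_∘, [[c,d]_•, [e,[f,g]_∘]_• + [e,[f,g]_•]_∘]_∘]_•` at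
`w = (a, …, g)`, where `∘` and `•` stand for `mo` and `mb`. -/
def lieSeptic (mo mb : A →ₗ[R] A →ₗ[R] A) (w : Fin 7 → A) : A :=
  ⁅⁅w 0, w 1⁆[mo],
    ⁅⁅w 2, w 3⁆[mb], ⁅w 4, ⁅w 5, w 6⁆[mo]⁆[mb] + ⁅w 4, ⁅w 5, w 6⁆[mb]⁆[mo]⁆[mo]⁆[mb]

theorem grassmannSum_commutator_generic {ι : Type*} [Fintype ι] [DecidableEq ι]
    (m : A →ₗ[R] A →ₗ[R] A) (v : ι → A) :
    grassmannSum R (fun φ : Fin 2 → ι => ⁅v (φ 0), v (φ 1)⁆[m]) =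
      (2 : ℤ) • grassmannExtension _ m (genericOddElement R v) (genericOddElement R v) :=
  grassmannSum_commutator_self_of_odd odd_one m fun φ : Fin 1 → ι => v (φ 0)

theorem grassmannSum_commutator_commutator_generic {ι : Type*} [Fintype ι] [DecidableEq ι]
    (m m' : A →ₗ[R] A →ₗ[R] A) (v : ι → A) :
    grassmannSum R (fun φ : Fin 3 → ι => ⁅v (φ 0), ⁅v (φ 1), v (φ 2)⁆[m]⁆[m']) =
      (2 : ℤ) • ⁅genericOddElement R v,
        grassmannExtension _ m (genericOddElement R v) (genericOddElement R v)⁆[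
          grassmannExtension _ m'] := by
  rw [← map_zsmul, ← grassmannSum_commutator_generic]
  exact grassmannSum_commutator_of_even (by decide) m' (fun φ : Fin 1 → ι => v (φ 0))
    fun φ : Fin 2 → ι => ⁅v (φ 0), v (φ 1)⁆[m]

theorem grassmannSum_lieSeptic {ι : Type*} [Fintype ι] [DecidableEq ι]
    (mo mb : A →ₗ[R] A →ₗ[R] A) (v : ι → A) {x p q : A ⊗[R] ExteriorAlgebra R (ι → R)}
    {Mo Mb : A ⊗[R] ExteriorAlgebra R (ι → R) →ₗ[R] A ⊗[R] ExteriorAlgebra R (ι → R) →ₗ[R]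
      A ⊗[R] ExteriorAlgebra R (ι → R)}
    (hMo : Mo = grassmannExtension (ι → R) mo) (hMb : Mb = grassmannExtension (ι → R) mb)
    (hx : x = genericOddElement R v) (hp : p = Mo x x) (hq : q = Mb x x) :
    grassmannSum R (fun φ => lieSeptic mo mb (v ∘ φ)) =
      (8 : ℤ) • ⁅p, ⁅q, ⁅x, p⁆[Mb] + ⁅x, q⁆[Mo]⁆[Mo]⁆[Mb] := by
  have cubic : grassmannSum R (fun φ : Fin 3 → ι =>
      ⁅v (φ 0), ⁅v (φ 1), v (φ 2)⁆[mo]⁆[mb] + ⁅v (φ 0), ⁅v (φ 1), v (φ 2)⁆[mb]⁆[mo]) =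
        (2 : ℤ) • (⁅x, p⁆[Mb] + ⁅x, q⁆[Mo]) := by
    simp only [grassmannSum_add, grassmannSum_commutator_commutator_generic, smul_add, hp, hq, hMo,
      hMb, hx]
  have quintic : grassmannSum R (fun φ : Fin 5 → ι => ⁅⁅v (φ 0), v (φ 1)⁆[mb],
      ⁅v (φ 2), ⁅v (φ 3), v (φ 4)⁆[mo]⁆[mb] + ⁅v (φ 2), ⁅v (φ 3), v (φ 4)⁆[mb]⁆[mo]⁆[mo]) =
        (4 : ℤ) • ⁅q, ⁅x, p⁆[Mb] + ⁅x, q⁆[Mo]⁆[Mo] := by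
    rw [show (4 : ℤ) = 2 * 2 from rfl, mul_smul, ← map_zsmul, ← cubic, ← LinearMap.smul_apply,
      ← map_zsmul, hq, hMb, hx, ← grassmannSum_commutator_generic, hMo]
    exact grassmannSum_commutator_of_even (m := 2) (n := 3) (by decide) mo
      (fun φ => ⁅v (φ 0), v (φ 1)⁆[mb]) fun φ =>
        ⁅v (φ 0), ⁅v (φ 1), v (φ 2)⁆[mo]⁆[mb] + ⁅v (φ 0), ⁅v (φ 1), v (φ 2)⁆[mb]⁆[mo]
  rw [show (8 : ℤ) = 2 * 4 from rfl, mul_smul, ← map_zsmul, ← quintic, ← LinearMap.smul_apply,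
    ← map_zsmul, hp, hMo, hx, ← grassmannSum_commutator_generic, hMb]
  exact grassmannSum_commutator_of_even (m := 2) (n := 5) (by decide) mb
    (fun φ => ⁅v (φ 0), v (φ 1)⁆[mo]) fun φ => ⁅⁅v (φ 0), v (φ 1)⁆[mb],
      ⁅v (φ 2), ⁅v (φ 3), v (φ 4)⁆[mo]⁆[mb] + ⁅v (φ 2), ⁅v (φ 3), v (φ 4)⁆[mb]⁆[mo]⁆[mo]

theorem grassmannSum_lieSeptic_sub_swap {ι : Type*} [Fintype ι] [DecidableEq ι]
    {mo mb : A →ₗ[R] A →ₗ[R] A}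
    (oassoc : ∀ x y z : A, mo (mo x y) z = mo x (mo y z))
    (bassoc : ∀ x y z : A, mb (mb x y) z = mb x (mb y z))
    (interchange : ∀ w x y z : A, mb (mo w x) (mo y z) = mo (mb w y) (mb x z)) (v : ι → A) :
    grassmannSum R (fun φ => lieSeptic mo mb (v ∘ φ) - lieSeptic mb mo (v ∘ φ)) = 0 := by
  have superalgebra := isInterchangeSuperalgebra_grassmannExtension (N := ι → R)
    oassoc bassoc interchange
  obtain ⟨Mo, hMo⟩ : ∃ M, M = grassmannExtension (ι → R) mo := ⟨_, rfl⟩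
  obtain ⟨Mb, hMb⟩ : ∃ M, M = grassmannExtension (ι → R) mb := ⟨_, rfl⟩
  obtain ⟨x, hx⟩ : ∃ x, x = genericOddElement R v := ⟨_, rfl⟩
  obtain ⟨p, hp⟩ : ∃ p, p = Mo x x := ⟨_, rfl⟩
  obtain ⟨q, hq⟩ : ∃ q, q = Mb x x := ⟨_, rfl⟩
  have x_odd : x ∈ grassmannParity R A (ι → R) 1 := hx ▸ genericOddElement_mem_parity v
  rw [← hMo, ← hMb] at superalgebra
  rw [grassmannSum_sub, grassmannSum_lieSeptic mo mb v hMo hMb hx hp hq,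
    grassmannSum_lieSeptic mb mo v hMb hMo hx hq hp,
    superalgebra.commutator_commutator_cubic_symm x_odd hp hq, add_comm ⁅x, q⁆[Mo], sub_self]

theorem sum_sign_smul_lieSeptic_sub_swap {mo mb : A →ₗ[R] A →ₗ[R] A}
    (oassoc : ∀ x y z : A, mo (mo x y) z = mo x (mo y z))
    (bassoc : ∀ x y z : A, mb (mb x y) z = mb x (mb y z))
    (interchange : ∀ w x y z : A, mb (mo w x) (mo y z) = mo (mb w y) (mb x z)) (v : Fin 7 → A) :
    ∑ σ : Equiv.Perm (Fin 7),
      (Equiv.Perm.sign σ : ℤ) • (lieSeptic mo mb (v ∘ σ) - lieSeptic mb mo (v ∘ σ)) = 0 :=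
  sum_sign_smul_eq_zero_of_grassmannSum_eq_zero (R := R)
    (Φ := fun φ => lieSeptic mo mb (v ∘ φ) - lieSeptic mb mo (v ∘ φ))
    (grassmannSum_lieSeptic_sub_swap oassoc bassoc interchange v)

theorem stmt_14_general (mo mb : A →ₗ[R] A →ₗ[R] A)
    (oassoc : ∀ x y z : A, mo (mo x y) z = mo x (mo y z))
    (bassoc : ∀ x y z : A, mb (mb x y) z = mb x (mb y z))
    (interchange : ∀ w x y z : A, mb (mo w x) (mo y z) = mo (mb w y) (mb x z))
    (lo lb : A → A → A) (hlo : ∀ x y : A, lo x y = mo x y - mo y x)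
    (hlb : ∀ x y : A, lb x y = mb x y - mb y x) (v : Fin 7 → A) :
    ∑ σ : Equiv.Perm (Fin 7),
      (Equiv.Perm.sign σ : ℤ) •
        ( lb (lo (v (σ 0)) (v (σ 1)))
             (lo (lb (v (σ 2)) (v (σ 3))) (lb (v (σ 4)) (lo (v (σ 5)) (v (σ 6)))))
        + lb (lo (v (σ 0)) (v (σ 1)))
             (lo (lb (v (σ 2)) (v (σ 3))) (lo (v (σ 4)) (lb (v (σ 5)) (v (σ 6)))))
        - lo (lb (v (σ 0)) (v (σ 1)))
             (lb (lo (v (σ 2)) (v (σ 3))) (lb (v (σ 4)) (lo (v (σ 5)) (v (σ 6)))))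
        - lo (lb (v (σ 0)) (v (σ 1)))
             (lb (lo (v (σ 2)) (v (σ 3))) (lo (v (σ 4)) (lb (v (σ 5)) (v (σ 6))))) )
      = 0 := by
  obtain rfl : lo = fun x y => ⁅x, y⁆[mo] := funext₂ hlo
  obtain rfl : lb = fun x y => ⁅x, y⁆[mb] := funext₂ hlb
  rw [← sum_sign_smul_lieSeptic_sub_swap oassoc bassoc interchange v]
  refine Finset.sum_congr rfl fun σ _ => congrArg _ ?_
  simp only [lieSeptic, Function.comp_apply, map_add]
  abel

end SepticIdentity

/-- New degree-7 identity relating the two Lie brackets in an associative interchange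
algebra: an alternating sum over all 5040 permutations of (a,b,c,d,e,f,g). -/
theorem stmt_14 {F : Type*} [Field F] [CharZero F]
    {A : Type*} [AddCommGroup A] [Module F A]
    (mo mb : A →ₗ[F] A →ₗ[F] A)
    (oassoc : ∀ x y z : A, mo (mo x y) z = mo x (mo y z))
    (bassoc : ∀ x y z : A, mb (mb x y) z = mb x (mb y z))
    (interchange : ∀ w x y z : A, mb (mo w x) (mo y z) = mo (mb w y) (mb x z))
    (lo lb : A → A → A)
    (hlo : ∀ x y : A, lo x y = mo x y - mo y x)
    (hlb : ∀ x y : A, lb x y = mb x y - mb y x)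
    (a b c d e f g : A) (v : Fin 7 → A) (hv : v = ![a, b, c, d, e, f, g]) :
    ∑ σ : Equiv.Perm (Fin 7),
      (Equiv.Perm.sign σ : ℤ) •
        ( lb (lo (v (σ 0)) (v (σ 1)))
             (lo (lb (v (σ 2)) (v (σ 3))) (lb (v (σ 4)) (lo (v (σ 5)) (v (σ 6)))))
        + lb (lo (v (σ 0)) (v (σ 1)))
             (lo (lb (v (σ 2)) (v (σ 3))) (lo (v (σ 4)) (lb (v (σ 5)) (v (σ 6)))))
        - lo (lb (v (σ 0)) (v (σ 1)))
             (lb (lo (v (σ 2)) (v (σ 3))) (lb (v (σ 4)) (lo (v (σ 5)) (v (σ 6)))))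
        - lo (lb (v (σ 0)) (v (σ 1)))
             (lb (lo (v (σ 2)) (v (σ 3))) (lo (v (σ 4)) (lb (v (σ 5)) (v (σ 6))))) )
      = 0 := by
  exact stmt_14_general mo mb oassoc bassoc interchange lo lb hlo hlb v
end
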